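/- arXiv:2006.12627 — 7 statements merged into one kernel-verified Lean document; each statement's English description precedes it below -/
import Mathlib

section
/- In the decay setup, the following hold: (a) Ĉ ‖v‖_b² − ‖v‖_b + 𝔠 ‖v₀‖ ≥ 0; and (b) if moreover 4Ĉ𝔠‖v₀‖ ≤ 1 and ‖v‖_b < (1 + √(1 − 4Ĉ𝔠‖v₀‖))/(2Ĉ), then ‖v‖_b ≤ 2𝔠‖v₀‖, i.e. ‖v_t‖ ≤ 2𝔠‖v₀‖ e^{−bt} for every t ≥ 0. -/
/-!
Write `N = ‖v‖_b`. The bound `‖v_s‖ ≤ N e^{-bs}` turns the growth condition on `G` into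
`‖G(s)‖ ≤ C_F N² e^{-2bs}`. In the integral equation, the Duhamel term is then at most
`𝔠 C_F N² e^{-bt} ∫₀^∞ e^{-bs} ds = (𝔠/b) C_F N² e^{-bt}`, and the tail integral of `G` is at most
`C_F N² e^{-2bt} / (2b)`. Multiplying by `e^{bt}` and taking the supremum over `t` gives
`N ≤ 𝔠‖v₀‖ + Ĉ N²`, which is (a). For (b), a value strictly below the larger root at which the
quadratic is nonnegative lies below the smaller root, and the latter is at most `2𝔠‖v₀‖` because
`1 - √(1 - x) ≤ x` on `[0, 1]`.
-/

open MeasureTheory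
open scoped InnerProductSpace BigOperators

section
variable {H : Type*} [NormedAddCommGroup H] [InnerProductSpace ℝ H]

/-- No integrability of `G` is needed: a non-integrable `G` has integral `0`. -/
lemma norm_tail_integral_le {b K t : ℝ} (hb : 0 < b) (ht : 0 ≤ t) {G : ℝ → H}
    (hG : ∀ s, 0 ≤ s → ‖G s‖ ≤ K * Real.exp (-(2 * b) * s)) :
    ‖∫ s in Set.Ioi t, G s‖ ≤ K * (Real.exp (-(2 * b) * t) / (2 * b)) := by
  have hneg : -(2 * b) < 0 := by linarith
  have hint : IntegrableOn (fun s => K * Real.exp (-(2 * b) * s)) (Set.Ioi t) :=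
    (integrableOn_exp_mul_Ioi hneg t).const_mul K
  have h := norm_integral_le_of_norm_le (f := G) hint
    ((ae_restrict_mem measurableSet_Ioi).mono fun s hs => hG s (ht.trans (le_of_lt hs)))
  rw [integral_const_mul, integral_exp_mul_Ioi hneg] at h
  simpa only [neg_div_neg_eq] using h

lemma norm_duhamel_integral_le {b c K t : ℝ} (hb : 0 < b) (hc : 0 ≤ c) (hK : 0 ≤ K)
    (ht : 0 ≤ t) {V : ℝ → H →L[ℝ] H} {G : ℝ → H}
    (hV : ∀ t, 0 ≤ t → ‖V t‖ ≤ c * Real.exp (-b * t))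
    (hG : ∀ s, 0 ≤ s → ‖G s‖ ≤ K * Real.exp (-(2 * b) * s)) :
    ‖∫ s in (0:ℝ)..t, V (t - s) (G s)‖ ≤ c * K * Real.exp (-b * t) / b := by
  have hneg : -b < 0 := by linarith
  have hint : IntegrableOn (fun s => c * K * Real.exp (-b * t) * Real.exp (-b * s))
      (Set.Ioi 0) := (integrableOn_exp_mul_Ioi hneg 0).const_mul _
  have hle : ∀ s ∈ Set.Ioc 0 t,
      ‖V (t - s) (G s)‖ ≤ c * K * Real.exp (-b * t) * Real.exp (-b * s) := by
    intro s hs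
    calc ‖V (t - s) (G s)‖ ≤ ‖V (t - s)‖ * ‖G s‖ := (V (t - s)).le_opNorm _
      _ ≤ (c * Real.exp (-b * (t - s))) * (K * Real.exp (-(2 * b) * s)) :=
          mul_le_mul (hV _ (by linarith [hs.2])) (hG s hs.1.le) (norm_nonneg _) (by positivity)
      _ = c * K * (Real.exp (-b * (t - s)) * Real.exp (-(2 * b) * s)) := by ring
      _ = c * K * (Real.exp (-b * t) * Real.exp (-b * s)) := by
          rw [← Real.exp_add, ← Real.exp_add]; ring_nf
      _ = _ := by ring
  rw [intervalIntegral.integral_of_le ht]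
  calc ‖∫ s in Set.Ioc 0 t, V (t - s) (G s)‖
      ≤ ∫ s in Set.Ioc 0 t, c * K * Real.exp (-b * t) * Real.exp (-b * s) :=
        norm_integral_le_of_norm_le (hint.mono_set Set.Ioc_subset_Ioi_self)
          ((ae_restrict_mem measurableSet_Ioc).mono hle)
    _ ≤ ∫ s in Set.Ioi 0, c * K * Real.exp (-b * t) * Real.exp (-b * s) :=
        setIntegral_mono_set hint (Filter.Eventually.of_forall fun s => by
          simp only [Pi.zero_apply]; positivity) Set.Ioc_subset_Ioi_self.eventuallyLE
    _ = c * K * Real.exp (-b * t) / b := by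
        rw [integral_const_mul, integral_exp_mul_Ioi hneg]
        simp [div_eq_mul_inv]

lemma norm_sum_inner_smul_le {m : ℕ} (φ ψ : Fin m → H) (w : H) :
    ‖∑ i, ⟪ψ i, w⟫_ℝ • φ i‖ ≤ (∑ i, ‖φ i‖ * ‖ψ i‖) * ‖w‖ := by
  rw [Finset.sum_mul]
  refine (norm_sum_le _ _).trans (Finset.sum_le_sum fun i _ => ?_)
  rw [norm_smul]
  calc ‖⟪ψ i, w⟫_ℝ‖ * ‖φ i‖ ≤ (‖ψ i‖ * ‖w‖) * ‖φ i‖ := by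
        gcongr; exact norm_inner_le_norm _ _
    _ = _ := by ring

end

/-- A point strictly below the larger root of `C n² - n + a` at which the quadratic is nonnegative
is at most the smaller root, hence at most `2a`. -/
lemma le_two_mul_of_quadratic {C a n : ℝ} (hC : 0 < C) (ha : 0 ≤ a)
    (hq : 0 ≤ C * n ^ 2 - n + a) (h1 : 4 * C * a ≤ 1)
    (hn : n < (1 + Real.sqrt (1 - 4 * C * a)) / (2 * C)) : n ≤ 2 * a := by
  have hCa : 0 ≤ C * a := by positivity
  have hs0 := Real.sqrt_nonneg (1 - 4 * C * a)
  have hsq := Real.sq_sqrt (show 0 ≤ 1 - 4 * C * a by linarith)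
  set s := Real.sqrt (1 - 4 * C * a)
  rw [lt_div_iff₀ (by positivity)] at hn
  have hs1 : s ≤ 1 := by nlinarith
  -- Completing the square: `(2Cn - 1)² - s² = 4C (Cn² - n + a)`.
  have hfac : 0 ≤ (2 * C * n - 1 - s) * (2 * C * n - 1 + s) := by
    have : (2 * C * n - 1 - s) * (2 * C * n - 1 + s) = 4 * C * (C * n ^ 2 - n + a) := by
      linear_combination -hsq
    rw [this]; positivity
  have hlow : 2 * C * n - 1 + s ≤ 0 := by
    by_contra! hcon
    nlinarith
  have hss : s ^ 2 ≤ s := by nlinarith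
  have : 2 * C * n ≤ 2 * C * (2 * a) := by linarith
  exact le_of_mul_le_mul_left this (by positivity)

/-- In the decay setup (an amplitude `v` solving the integral equation
`v_t = V(t)v₀ + ∫₀^t V(t-s) G(s) ds - Σᵢ ⟪ψᵢ, ∫_t^∞ G(s) ds⟫ φᵢ` with `‖V(t)‖ ≤ 𝔠 e^{-bt}`
and `‖G(s)‖ ≤ C_F ‖v_s‖²`, and `nb = ‖v‖_b = sup_{t≥0} e^{bt}‖v_t‖`):
(a) `Ĉ nb² - nb + 𝔠 ‖v₀‖ ≥ 0`, where `Ĉ = C_F (𝔠/b + (1/(2b)) Σᵢ ‖φᵢ‖ ‖ψᵢ‖)`; and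
(b) if `4 Ĉ 𝔠 ‖v₀‖ ≤ 1` and `nb` lies strictly below the larger root of the quadratic, then
`nb ≤ 2 𝔠 ‖v₀‖`, i.e. `‖v_t‖ ≤ 2 𝔠 ‖v₀‖ e^{-bt}` for every `t ≥ 0`. -/
theorem amplitude_decay_bound
    {H : Type*} [NormedAddCommGroup H] [InnerProductSpace ℝ H] [CompleteSpace H]
    {m : ℕ} (hm : 1 ≤ m)
    (b frakc CF : ℝ) (hb : 0 < b) (hfrakc : 1 ≤ frakc) (hCF : 0 < CF)
    (φ ψ : Fin m → H)
    (V : ℝ → H →L[ℝ] H)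
    (hV : ∀ t : ℝ, 0 ≤ t → ‖V t‖ ≤ frakc * Real.exp (-b * t))
    (hVcont : ∀ x : H, ContinuousOn (fun t => V t x) (Set.Ici (0:ℝ)))
    (v : ℝ → H) (hv : ContinuousOn v (Set.Ici (0:ℝ)))
    (nb : ℝ)
    (hnb : IsLUB {r : ℝ | ∃ t : ℝ, 0 ≤ t ∧ r = Real.exp (b * t) * ‖v t‖} nb)
    (G : ℝ → H)
    (hG : AEStronglyMeasurable G (volume.restrict (Set.Ici (0:ℝ))))
    (hGbound : ∀ s : ℝ, 0 ≤ s → ‖G s‖ ≤ CF * ‖v s‖ ^ 2)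
    (heq : ∀ t : ℝ, 0 ≤ t →
      v t = V t (v 0) + (∫ s in (0:ℝ)..t, V (t - s) (G s))
        - ∑ i, ⟪ψ i, ∫ s in Set.Ioi t, G s⟫_ℝ • φ i)
    (Ch : ℝ) (hCh : Ch = CF * (frakc / b + (1 / (2 * b)) * ∑ i, ‖φ i‖ * ‖ψ i‖)) :
    0 ≤ Ch * nb ^ 2 - nb + frakc * ‖v 0‖ ∧
      (4 * Ch * (frakc * ‖v 0‖) ≤ 1 →
        nb < (1 + Real.sqrt (1 - 4 * Ch * (frakc * ‖v 0‖))) / (2 * Ch) →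
          nb ≤ 2 * frakc * ‖v 0‖ ∧
            ∀ t : ℝ, 0 ≤ t → ‖v t‖ ≤ 2 * frakc * ‖v 0‖ * Real.exp (-b * t)) := by
  have hc0 : 0 ≤ frakc := by linarith
  set S := ∑ i, ‖φ i‖ * ‖ψ i‖ with hS
  have hS0 : 0 ≤ S := Finset.sum_nonneg fun i _ => by positivity
  have hCh0 : 0 < Ch := by
    rw [hCh]
    have : 0 < frakc / b := div_pos (by linarith) hb
    positivity
  have hmul : ∀ t, 0 ≤ t → Real.exp (b * t) * ‖v t‖ ≤ nb := fun t ht => hnb.1 ⟨t, ht, rfl⟩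
  have hvb : ∀ t, 0 ≤ t → ‖v t‖ ≤ nb * Real.exp (-b * t) := by
    intro t ht
    have h := mul_le_mul_of_nonneg_right (hmul t ht) (Real.exp_pos (-b * t)).le
    have hE : Real.exp (b * t) * Real.exp (-b * t) = 1 := by
      rw [← Real.exp_add]; simp
    calc ‖v t‖ = Real.exp (b * t) * Real.exp (-b * t) * ‖v t‖ := by rw [hE, one_mul]
      _ = Real.exp (b * t) * ‖v t‖ * Real.exp (-b * t) := by ring
      _ ≤ _ := h
  have hGb : ∀ s, 0 ≤ s → ‖G s‖ ≤ CF * nb ^ 2 * Real.exp (-(2 * b) * s) := by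
    intro s hs
    calc ‖G s‖ ≤ CF * ‖v s‖ ^ 2 := hGbound s hs
      _ ≤ CF * (nb * Real.exp (-b * s)) ^ 2 := by
          gcongr; exact hvb s hs
      _ = CF * nb ^ 2 * (Real.exp (-b * s) * Real.exp (-b * s)) := by ring
      _ = _ := by rw [← Real.exp_add]; ring_nf
  have hK : 0 ≤ CF * nb ^ 2 := by positivity
  have hnorm : ∀ t, 0 ≤ t →
      ‖v t‖ ≤ (frakc * ‖v 0‖ + Ch * nb ^ 2) * Real.exp (-b * t) := by
    intro t ht
    have h1 : ‖V t (v 0)‖ ≤ frakc * Real.exp (-b * t) * ‖v 0‖ :=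
      (V t).le_of_opNorm_le (hV t ht) _
    have h2 := norm_duhamel_integral_le hb hc0 hK ht hV hGb
    have h3 := (norm_sum_inner_smul_le φ ψ (∫ s in Set.Ioi t, G s)).trans
      (mul_le_mul_of_nonneg_left (norm_tail_integral_le hb ht hGb) hS0)
    have hexp : Real.exp (-(2 * b) * t) ≤ Real.exp (-b * t) :=
      Real.exp_le_exp.2 (by nlinarith)
    have h4 : S * (CF * nb ^ 2 * (Real.exp (-(2 * b) * t) / (2 * b))) ≤
        S * (CF * nb ^ 2 * (Real.exp (-b * t) / (2 * b))) := by gcongr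
    calc ‖v t‖ ≤ ‖V t (v 0)‖ + ‖∫ s in (0:ℝ)..t, V (t - s) (G s)‖
          + ‖∑ i, ⟪ψ i, ∫ s in Set.Ioi t, G s⟫_ℝ • φ i‖ := by
          rw [heq t ht]
          exact (norm_sub_le _ _).trans (add_le_add_left (norm_add_le _ _) _)
      _ ≤ frakc * Real.exp (-b * t) * ‖v 0‖ + frakc * (CF * nb ^ 2) * Real.exp (-b * t) / b
          + S * (CF * nb ^ 2 * (Real.exp (-b * t) / (2 * b))) :=
          add_le_add (add_le_add h1 h2) (h3.trans h4)
      _ = _ := by rw [hCh]; field_simp; ring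
  have hquad : 0 ≤ Ch * nb ^ 2 - nb + frakc * ‖v 0‖ := by
    have : nb ≤ frakc * ‖v 0‖ + Ch * nb ^ 2 := by
      refine hnb.2 ?_
      rintro r ⟨t, ht, rfl⟩
      have h := mul_le_mul_of_nonneg_left (hnorm t ht) (Real.exp_pos (b * t)).le
      have hE : Real.exp (b * t) * Real.exp (-b * t) = 1 := by
        rw [← Real.exp_add]; simp
      rwa [mul_left_comm, hE, mul_one] at h
    linarith
  refine ⟨hquad, fun h1 h2 => ?_⟩
  have hle : nb ≤ 2 * frakc * ‖v 0‖ := by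
    rw [mul_assoc]
    exact le_two_mul_of_quadratic hCh0 (by positivity) hquad h1 h2
  exact ⟨hle, fun t ht => (hvb t ht).trans (by gcongr)⟩
end

section
/- In the phase-map setup, for every u ∈ O at which Φ is Fréchet differentiable and every w ∈ H, the derivative a := DΦ(u)·w ∈ ℝ^m satisfies the linear system Σ_{j=1}^m M_{ij}(u) a_j = ⟨ψ^i_{Φ(u)}, w⟩ for each 1 ≤ i ≤ m, where M_{ij}(u) := δ_{ij} − ⟨u − φ_{Φ(u)}, ψ^i_{Φ(u),j}⟩. -/
/-!
Near `u` the function `v ↦ ⟪v - φ (Φ v), ψ i (Φ v)⟫` vanishes identically because `O` is open, so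
its derivative at `u` is zero. With `a = DΦ(u) w`, the product and chain rules give
`⟪u - φ (Φ u), Dψ i a⟫ + ⟪w - Dφ a, ψ i (Φ u)⟫ = 0`. Expanding `Dψ i a` and `Dφ a` in the standard
basis (`inner_clm_eq_sum`) and applying biorthogonality to the second term yields the linear system.
-/

open scoped InnerProductSpace BigOperators

/-- Coordinate expansion of a pairing with the total derivative in terms of partial derivatives. -/
lemma inner_clm_eq_sum {H : Type*} [NormedAddCommGroup H] [InnerProductSpace ℝ H] {m : ℕ}
    (x : H) (L : EuclideanSpace ℝ (Fin m) →L[ℝ] H) (a : EuclideanSpace ℝ (Fin m)) :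
    ⟪x, L a⟫_ℝ = ∑ j, ⟪x, L (EuclideanSpace.single j 1)⟫_ℝ * a j := by
  conv_lhs => rw [← (EuclideanSpace.basisFun (Fin m) ℝ).sum_repr a]
  simp [map_sum, inner_sum, inner_smul_right, mul_comm]

/-- In the phase-map setup (Φ satisfying the variational-phase identity
`⟪u - φ_{Φ(u)}, ψ^i_{Φ(u)}⟫ = 0` on an open set `O`, with biorthogonality
`⟪ψ^i_α, φ_{α,j}⟫ = δ_{ij}`), at every `u ∈ O` where `Φ` is Fréchet differentiable the
derivative `a = DΦ(u)·w` solves `Σ_j M_{ij}(u) a_j = ⟪ψ^i_{Φ(u)}, w⟫` where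
`M_{ij}(u) = δ_{ij} - ⟪u - φ_{Φ(u)}, ψ^i_{Φ(u),j}⟫`. -/
theorem phase_map_derivative_linear_system
    {H : Type*} [NormedAddCommGroup H] [InnerProductSpace ℝ H] [CompleteSpace H]
    {m : ℕ} (hm : 1 ≤ m)
    (O : Set H) (hO : IsOpen O)
    (φ : EuclideanSpace ℝ (Fin m) → H)
    (Dφ : EuclideanSpace ℝ (Fin m) → EuclideanSpace ℝ (Fin m) →L[ℝ] H)
    (hφ : ∀ α, HasFDerivAt φ (Dφ α) α) (hφC : Continuous Dφ)
    (ψ : Fin m → EuclideanSpace ℝ (Fin m) → H)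
    (Dψ : Fin m → EuclideanSpace ℝ (Fin m) → EuclideanSpace ℝ (Fin m) →L[ℝ] H)
    (hψ : ∀ i α, HasFDerivAt (ψ i) (Dψ i α) α) (hψC : ∀ i, Continuous (Dψ i))
    (Φ : H → EuclideanSpace ℝ (Fin m))
    (hvar : ∀ u ∈ O, ∀ i : Fin m, ⟪u - φ (Φ u), ψ i (Φ u)⟫_ℝ = 0)
    (hbio : ∀ (α : EuclideanSpace ℝ (Fin m)) (i j : Fin m),
      ⟪ψ i α, Dφ α (EuclideanSpace.single j 1)⟫_ℝ = if i = j then (1:ℝ) else 0)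
    (u : H) (hu : u ∈ O)
    (DΦu : H →L[ℝ] EuclideanSpace ℝ (Fin m))
    (hΦu : HasFDerivAt Φ DΦu u)
    (w : H) :
    ∀ i : Fin m,
      ∑ j, ((if i = j then (1:ℝ) else 0)
              - ⟪u - φ (Φ u), Dψ i (Φ u) (EuclideanSpace.single j 1)⟫_ℝ) * (DΦu w) j
        = ⟪ψ i (Φ u), w⟫_ℝ := by
  intro i
  have hd := ((hasFDerivAt_id u).sub ((hφ (Φ u)).comp u hΦu)).inner ℝ ((hψ i (Φ u)).comp u hΦu)
  have hz : HasFDerivAt (fun v => ⟪v - φ (Φ v), ψ i (Φ v)⟫_ℝ) (0 : H →L[ℝ] ℝ) u := by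
    refine (hasFDerivAt_const (0 : ℝ) u).congr_of_eventuallyEq ?_
    filter_upwards [hO.mem_nhds hu] with v hv using hvar v hv i
  have key : ⟪u - φ (Φ u), Dψ i (Φ u) (DΦu w)⟫_ℝ
      + ⟪w - Dφ (Φ u) (DΦu w), ψ i (Φ u)⟫_ℝ = 0 := by
    simpa using DFunLike.congr_fun (hd.unique hz) w
  rw [inner_sub_left w, real_inner_comm (ψ i (Φ u)) w,
    real_inner_comm (ψ i (Φ u)) (Dφ (Φ u) (DΦu w)), inner_clm_eq_sum (u - φ (Φ u)),
    inner_clm_eq_sum (ψ i (Φ u))] at key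
  simp only [hbio] at key
  simp only [sub_mul, Finset.sum_sub_distrib]
  linarith
end

section
/- In the phase-map setup, suppose in addition that α ∈ ℝ^m is such that φ_α ∈ O and Φ(φ_α) = α. Then for every w ∈ H and every 1 ≤ i ≤ m: (DΦ(φ_α)·w)^i = ⟨ψ^i_α, w⟩. That is, at points on the manifold the Fréchet derivative of the phase map is exactly the projection onto the adjoint neutral eigenmodes. -/
open scoped InnerProductSpace BigOperators

/-!
Differentiating the identity `⟪u - φ (Φ u), ψ i (Φ u)⟫ = 0` at `u = φ α` in the direction `w`
gives `⟪w - Dφ α (DΦ w), ψ i α⟫ = 0`, because the residual `u - φ (Φ u)` vanishes there.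
By biorthogonality and linearity, `⟪ψ i α, Dφ α v⟫ = v i` for every `v`; taking `v = DΦ w`
yields the claim.
-/

/-- In the phase-map setup, if `α ∈ ℝ^m` is such that `φ_α ∈ O` and
`Φ(φ_α) = α`, then the Fréchet derivative of the phase map at the on-manifold point `φ_α` is
exactly the projection onto the adjoint neutral eigenmodes: `(DΦ(φ_α)·w)^i = ⟪ψ^i_α, w⟫`. -/
theorem phase_map_derivative_on_manifold
    {H : Type*} [NormedAddCommGroup H] [InnerProductSpace ℝ H] [CompleteSpace H]
    {m : ℕ} (hm : 1 ≤ m)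
    (O : Set H) (hO : IsOpen O)
    (φ : EuclideanSpace ℝ (Fin m) → H)
    (Dφ : EuclideanSpace ℝ (Fin m) → EuclideanSpace ℝ (Fin m) →L[ℝ] H)
    (hφ : ∀ α, HasFDerivAt φ (Dφ α) α) (hφC : Continuous Dφ)
    (ψ : Fin m → EuclideanSpace ℝ (Fin m) → H)
    (Dψ : Fin m → EuclideanSpace ℝ (Fin m) → EuclideanSpace ℝ (Fin m) →L[ℝ] H)
    (hψ : ∀ i α, HasFDerivAt (ψ i) (Dψ i α) α) (hψC : ∀ i, Continuous (Dψ i))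
    (Φ : H → EuclideanSpace ℝ (Fin m))
    (hvar : ∀ u ∈ O, ∀ i : Fin m, ⟪u - φ (Φ u), ψ i (Φ u)⟫_ℝ = 0)
    (hbio : ∀ (α : EuclideanSpace ℝ (Fin m)) (i j : Fin m),
      ⟪ψ i α, Dφ α (EuclideanSpace.single j 1)⟫_ℝ = if i = j then (1:ℝ) else 0)
    (α : EuclideanSpace ℝ (Fin m)) (hmem : φ α ∈ O) (hΦα : Φ (φ α) = α)
    (DΦu : H →L[ℝ] EuclideanSpace ℝ (Fin m))
    (hΦu : HasFDerivAt Φ DΦu (φ α)) :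
    ∀ (w : H) (i : Fin m), (DΦu w) i = ⟪ψ i α, w⟫_ℝ := by
  intro w i
  have hpair : ∀ v : EuclideanSpace ℝ (Fin m), ⟪ψ i α, Dφ α v⟫_ℝ = v i := by
    intro v
    have hv : v = ∑ j, v j • EuclideanSpace.single j (1 : ℝ) := by
      ext k
      simp [Pi.single_apply]
    conv_lhs => rw [hv]
    simp only [map_sum, map_smul, inner_sum, inner_smul_right, hbio]
    simp
  have hφΦ : HasFDerivAt (fun u => φ (Φ u)) ((Dφ α).comp DΦu) (φ α) :=
    HasFDerivAt.comp (φ α) (by rw [hΦα]; exact hφ α) hΦu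
  have hψΦ : HasFDerivAt (fun u => ψ i (Φ u)) ((Dψ i α).comp DΦu) (φ α) :=
    HasFDerivAt.comp (φ α) (by rw [hΦα]; exact hψ i α) hΦu
  have hder := ((hasFDerivAt_id (φ α)).sub hφΦ).inner ℝ hψΦ
  -- The differentiated function vanishes on the neighbourhood `O` of `φ α`.
  have hzero : HasFDerivAt (fun u => ⟪u - φ (Φ u), ψ i (Φ u)⟫_ℝ) (0 : H →L[ℝ] ℝ) (φ α) :=
    (hasFDerivAt_const (0 : ℝ) (φ α)).congr_of_eventuallyEq
      (Filter.eventually_of_mem (hO.mem_nhds hmem) fun u hu => hvar u hu i)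
  have h := congrArg (fun L : H →L[ℝ] ℝ => L w) (hder.unique hzero)
  -- At `φ α` the residual `u - φ (Φ u)` is zero, so the term containing `Dψ` drops out.
  simp [fderivInnerCLM_apply, hΦα, inner_sub_left] at h
  rw [real_inner_comm (ψ i α) w, real_inner_comm (ψ i α) (Dφ α (DΦu w)), hpair] at h
  linarith
end

section
/- In the phase-map setup, suppose additionally that ‖ψ^i_{β,j}‖ ≤ K' and ‖ψ^i_β‖ ≤ K_ψ for all β ∈ ℝ^m and 1 ≤ i,j ≤ m, and let u ∈ O satisfy ‖u − φ_{Φ(u)}‖ ≤ 1/(2 m K') (taking K' > 0). Then for every w ∈ H and every 1 ≤ i ≤ m: |(DΦ(u)·w)^i − ⟨ψ^i_{Φ(u)}, w⟩| ≤ 2 m^{3/2} K' K_ψ ‖u − φ_{Φ(u)}‖ ‖w‖. -/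
/-!
Write `v = u - φ (Φ u)` and `a = DΦ(u) w`. Differentiating the identity `⟪x - φ (Φ x), ψ k (Φ x)⟫ = 0`
at `u` in the direction `w` and using biorthogonality gives the implicit equation
`a k = ⟪ψ k (Φ u), w⟫ + ⟪v, Dψ k (Φ u) a⟫`, so the error in component `k` is at most `‖v‖ K' S`, where
`S = ∑ j, |a j|`. Summing over `k` gives `S ≤ m Kψ ‖w‖ + m ‖v‖ K' S`; the assumed closeness bounds the
last term by `S / 2`, whence `S ≤ 2 m Kψ ‖w‖`. This yields the estimate with `m` in place of
`m ^ (3/2)`, which is stronger since `1 ≤ m`.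
-/

open scoped InnerProductSpace BigOperators

/-- In the phase-map setup, if `‖ψ^i_{β,j}‖ ≤ K'` and `‖ψ^i_β‖ ≤ K_ψ`
uniformly, and `u ∈ O` satisfies `‖u - φ_{Φ(u)}‖ ≤ 1/(2 m K')`, then the derivative of the
phase map is the projection onto the adjoint eigenmodes up to an error linear in the distance
from the manifold: `|(DΦ(u)·w)^i - ⟪ψ^i_{Φ(u)}, w⟫| ≤ 2 m^{3/2} K' K_ψ ‖u - φ_{Φ(u)}‖ ‖w‖`. -/
theorem phase_map_derivative_first_order_approximation
    {H : Type*} [NormedAddCommGroup H] [InnerProductSpace ℝ H] [CompleteSpace H]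
    {m : ℕ} (hm : 1 ≤ m)
    (O : Set H) (hO : IsOpen O)
    (φ : EuclideanSpace ℝ (Fin m) → H)
    (Dφ : EuclideanSpace ℝ (Fin m) → EuclideanSpace ℝ (Fin m) →L[ℝ] H)
    (hφ : ∀ α, HasFDerivAt φ (Dφ α) α) (hφC : Continuous Dφ)
    (ψ : Fin m → EuclideanSpace ℝ (Fin m) → H)
    (Dψ : Fin m → EuclideanSpace ℝ (Fin m) → EuclideanSpace ℝ (Fin m) →L[ℝ] H)
    (hψ : ∀ i α, HasFDerivAt (ψ i) (Dψ i α) α) (hψC : ∀ i, Continuous (Dψ i))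
    (Φ : H → EuclideanSpace ℝ (Fin m))
    (hvar : ∀ u ∈ O, ∀ i : Fin m, ⟪u - φ (Φ u), ψ i (Φ u)⟫_ℝ = 0)
    (hbio : ∀ (α : EuclideanSpace ℝ (Fin m)) (i j : Fin m),
      ⟪ψ i α, Dφ α (EuclideanSpace.single j 1)⟫_ℝ = if i = j then (1:ℝ) else 0)
    (K' Kψ : ℝ) (hK' : 0 < K')
    (hDψbound : ∀ (β : EuclideanSpace ℝ (Fin m)) (i j : Fin m),
      ‖Dψ i β (EuclideanSpace.single j 1)‖ ≤ K')
    (hψbound : ∀ (β : EuclideanSpace ℝ (Fin m)) (i : Fin m), ‖ψ i β‖ ≤ Kψ)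
    (u : H) (hu : u ∈ O)
    (hclose : ‖u - φ (Φ u)‖ ≤ 1 / (2 * m * K'))
    (DΦu : H →L[ℝ] EuclideanSpace ℝ (Fin m))
    (hΦu : HasFDerivAt Φ DΦu u) :
    ∀ (w : H) (i : Fin m),
      |(DΦu w) i - ⟪ψ i (Φ u), w⟫_ℝ|
        ≤ 2 * (m : ℝ) ^ ((3:ℝ)/2) * K' * Kψ * ‖u - φ (Φ u)‖ * ‖w‖ := by
  intro w i
  set v : H := u - φ (Φ u) with hv
  set a : EuclideanSpace ℝ (Fin m) := DΦu w with ha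
  set S : ℝ := ∑ j, |a j| with hS
  have hS0 : 0 ≤ S := Finset.sum_nonneg fun j _ => abs_nonneg _
  have hm1 : (1 : ℝ) ≤ m := by exact_mod_cast hm
  have hKψ : 0 ≤ Kψ := (norm_nonneg _).trans (hψbound (Φ u) i)
  have hexp : ∀ L : EuclideanSpace ℝ (Fin m) →L[ℝ] H,
      L a = ∑ j, a j • L (EuclideanSpace.single j 1) := by
    intro L
    have h := (EuclideanSpace.basisFun (Fin m) ℝ).sum_repr a
    conv_lhs => rw [← h]
    simp
  have hkey : ∀ k, a k - ⟪ψ k (Φ u), w⟫_ℝ = ⟪v, Dψ k (Φ u) a⟫_ℝ := by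
    intro k
    have h1 : HasFDerivAt (fun x => x - φ (Φ x))
        (ContinuousLinearMap.id ℝ H - (Dφ (Φ u)).comp DΦu) u :=
      (hasFDerivAt_id u).sub ((hφ (Φ u)).comp u hΦu)
    have h2 : HasFDerivAt (fun x => ψ k (Φ x)) ((Dψ k (Φ u)).comp DΦu) u :=
      (hψ k (Φ u)).comp u hΦu
    have h3 := h1.inner ℝ h2
    -- The pairing vanishes on the whole neighbourhood `O` of `u`, so its derivative is zero.
    have h4 : HasFDerivAt (fun x => ⟪x - φ (Φ x), ψ k (Φ x)⟫_ℝ) (0 : H →L[ℝ] ℝ) u := by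
      refine (hasFDerivAt_const (0 : ℝ) u).congr_of_eventuallyEq ?_
      filter_upwards [hO.mem_nhds hu] with x hx using hvar x hx k
    have h5 := congrArg (fun L : H →L[ℝ] ℝ => L w) (h3.unique h4)
    have h6 : ⟪ψ k (Φ u), Dφ (Φ u) a⟫_ℝ = a k := by
      rw [hexp, inner_sum]
      simp [inner_smul_right, hbio]
    simp only [ContinuousLinearMap.comp_apply, ContinuousLinearMap.prod_apply,
      fderivInnerCLM_apply, sub_apply, ContinuousLinearMap.id_apply,
      zero_apply, inner_sub_left] at h5
    rw [← ha, real_inner_comm _ (Dφ (Φ u) a), h6, real_inner_comm _ w] at h5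
    rw [hv, inner_sub_left]
    linarith
  have herr : ∀ k, |a k - ⟪ψ k (Φ u), w⟫_ℝ| ≤ ‖v‖ * (K' * S) := by
    intro k
    rw [hkey]
    refine (abs_real_inner_le_norm _ _).trans ?_
    gcongr
    rw [hexp, hS, Finset.mul_sum]
    refine (norm_sum_le _ _).trans (Finset.sum_le_sum fun j _ => ?_)
    rw [norm_smul, Real.norm_eq_abs, mul_comm]
    gcongr
    exact hDψbound _ _ _
  have hSle : S ≤ m * (Kψ * ‖w‖ + ‖v‖ * (K' * S)) := by
    have h : ∀ k ∈ Finset.univ, |a k| ≤ Kψ * ‖w‖ + ‖v‖ * (K' * S) := by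
      intro k _
      have h1 : |⟪ψ k (Φ u), w⟫_ℝ| ≤ Kψ * ‖w‖ :=
        (abs_real_inner_le_norm _ _).trans (by gcongr; exact hψbound _ _)
      have h2 := abs_sub_abs_le_abs_sub (a k) ⟪ψ k (Φ u), w⟫_ℝ
      linarith [herr k]
    simpa [← hS, mul_add] using Finset.sum_le_sum h
  -- The smallness of `v` makes the feedback term at most `S / 2`, so it can be absorbed.
  have hhalf : m * (‖v‖ * K') ≤ 1 / 2 := by
    rw [le_div_iff₀ (by positivity)] at hclose
    linarith
  have hSfin : S ≤ 2 * m * Kψ * ‖w‖ := by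
    have := mul_le_mul_of_nonneg_right hhalf hS0
    linarith
  have hpow : (m : ℝ) ≤ (m : ℝ) ^ ((3:ℝ)/2) :=
    Real.self_le_rpow_of_one_le hm1 (by norm_num)
  calc |a i - ⟪ψ i (Φ u), w⟫_ℝ| ≤ ‖v‖ * (K' * S) := herr i
    _ ≤ ‖v‖ * (K' * (2 * m * Kψ * ‖w‖)) := by gcongr
    _ = 2 * m * K' * Kψ * ‖v‖ * ‖w‖ := by ring
    _ ≤ 2 * (m : ℝ) ^ ((3:ℝ)/2) * K' * Kψ * ‖v‖ * ‖w‖ := by gcongr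
end

section
/- In the phase-map setup, suppose additionally that φ and the ψ^i are twice continuously differentiable, that Φ is twice Fréchet differentiable on O, and that α ∈ ℝ^m is such that φ_α ∈ O and Φ(φ_α) = α. Then for every w ∈ H and every 1 ≤ i ≤ m: (D²Φ(φ_α)·w·w)^i = 2 Σ_{j=1}^m ⟨ψ^j_α, w⟩ ⟨ψ^i_{α,j}, w⟩ − Σ_{j,k=1}^m ⟨φ_{α,j}, ψ^i_{α,k}⟩ ⟨ψ^j_α, w⟩ ⟨ψ^k_α, w⟩. -/
/-!
Differentiating the variational-phase identity on `O` and using biorthogonality in the form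
`⟪ψ^i_β, Dφ_β v⟫ = v^i` gives, for `u ∈ O`,
`(DΦ(u) w)^i = ⟪w, ψ^i_{Φ(u)}⟫ + ⟪u - φ_{Φ(u)}, Dψ^i_{Φ(u)} (DΦ(u) w)⟫`
(`phase_deriv_formula`). At `u = φ_α` the second term vanishes, so `a := DΦ(φ_α) w` has coordinates
`⟪ψ^j_α, w⟫`. Differentiating the formula once more at `φ_α` in the direction `w`, the term in which
`Dψ^i_{Φ(u)} (DΦ(u) w)` is differentiated also vanishes, since its other factor `u - φ_{Φ(u)}` is
zero there. What remains is
`⟪w, Dψ^i_α a⟫ + ⟪w - Dφ_α a, Dψ^i_α a⟫`, and expanding `a` in coordinates yields the claim.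
-/

open scoped InnerProductSpace BigOperators

/-- A linear map on `ℝ^m` is determined by its values on the standard basis. -/
lemma clm_apply_eq_sum_single {H : Type*} [NormedAddCommGroup H] [InnerProductSpace ℝ H] {m : ℕ}
    (L : EuclideanSpace ℝ (Fin m) →L[ℝ] H) (v : EuclideanSpace ℝ (Fin m)) :
    L v = ∑ j, v j • L (EuclideanSpace.single j 1) := by
  have hv : v = ∑ j, v j • EuclideanSpace.single j (1 : ℝ) := by
    ext k
    simp [Finset.sum_apply, Pi.single_apply]
  conv_lhs => rw [hv]
  simp [map_sum]

/-- Implicit first-derivative formula for the phase map, valid on all of `O`. -/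
lemma phase_deriv_formula
    {H : Type*} [NormedAddCommGroup H] [InnerProductSpace ℝ H] {m : ℕ}
    {O : Set H} (hO : IsOpen O)
    {φ : EuclideanSpace ℝ (Fin m) → H} (hφ : Differentiable ℝ φ)
    {ψ : Fin m → EuclideanSpace ℝ (Fin m) → H} (hψ : ∀ i, Differentiable ℝ (ψ i))
    {Φ : H → EuclideanSpace ℝ (Fin m)}
    {DΦ : H → H →L[ℝ] EuclideanSpace ℝ (Fin m)}
    (hΦ : ∀ u ∈ O, HasFDerivAt Φ (DΦ u) u)
    (hvar : ∀ u ∈ O, ∀ i : Fin m, ⟪u - φ (Φ u), ψ i (Φ u)⟫_ℝ = 0)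
    (hbio : ∀ (α : EuclideanSpace ℝ (Fin m)) (i j : Fin m),
      ⟪ψ i α, fderiv ℝ φ α (EuclideanSpace.single j 1)⟫_ℝ = if i = j then (1:ℝ) else 0)
    {u : H} (hu : u ∈ O) (w : H) (i : Fin m) :
    (DΦ u w) i = ⟪w, ψ i (Φ u)⟫_ℝ
      + ⟪u - φ (Φ u), fderiv ℝ (ψ i) (Φ u) (DΦ u w)⟫_ℝ := by
  have h1 : HasFDerivAt (fun u => u - φ (Φ u))
      (ContinuousLinearMap.id ℝ H - (fderiv ℝ φ (Φ u)).comp (DΦ u)) u :=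
    (hasFDerivAt_id u).sub ((hφ (Φ u)).hasFDerivAt.comp u (hΦ u hu))
  have h2 : HasFDerivAt (fun u => ψ i (Φ u)) ((fderiv ℝ (ψ i) (Φ u)).comp (DΦ u)) u :=
    (hψ i (Φ u)).hasFDerivAt.comp u (hΦ u hu)
  have h3 := h1.inner ℝ h2
  have h0 : (fun u => ⟪u - φ (Φ u), ψ i (Φ u)⟫_ℝ) =ᶠ[nhds u] fun _ => (0 : ℝ) := by
    filter_upwards [hO.mem_nhds hu] with v hv using hvar v hv i
  have h4 := h3.unique ((hasFDerivAt_const (0 : ℝ) u).congr_of_eventuallyEq h0)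
  have h5 := congrArg (fun L => L w) h4
  simp only [ContinuousLinearMap.comp_apply, ContinuousLinearMap.prod_apply,
    fderivInnerCLM_apply, sub_apply, ContinuousLinearMap.id_apply,
    zero_apply, inner_sub_left w] at h5
  have h6 : ⟪fderiv ℝ φ (Φ u) (DΦ u w), ψ i (Φ u)⟫_ℝ = (DΦ u w) i := by
    rw [clm_apply_eq_sum_single, real_inner_comm, inner_sum]
    simp [inner_smul_right, hbio]
  rw [h6] at h5
  linarith

/-- In the phase-map setup, with `φ` and the `ψ^i` twice continuously
differentiable and `Φ` twice Fréchet differentiable on `O`, at an on-manifold point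
(`φ_α ∈ O`, `Φ(φ_α) = α`) the second derivative of the phase map is
`(D²Φ(φ_α)·w·w)^i = 2 Σ_j ⟪ψ^j_α, w⟫ ⟪ψ^i_{α,j}, w⟫ - Σ_{j,k} ⟪φ_{α,j}, ψ^i_{α,k}⟫ ⟪ψ^j_α, w⟫ ⟪ψ^k_α, w⟫`. -/
theorem phase_map_second_derivative_on_manifold
    {H : Type*} [NormedAddCommGroup H] [InnerProductSpace ℝ H] [CompleteSpace H]
    {m : ℕ} (hm : 1 ≤ m)
    (O : Set H) (hO : IsOpen O)
    (φ : EuclideanSpace ℝ (Fin m) → H) (hφ : ContDiff ℝ 2 φ)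
    (ψ : Fin m → EuclideanSpace ℝ (Fin m) → H) (hψ : ∀ i, ContDiff ℝ 2 (ψ i))
    (Φ : H → EuclideanSpace ℝ (Fin m))
    (DΦ : H → H →L[ℝ] EuclideanSpace ℝ (Fin m))
    (D2Φ : H → H →L[ℝ] H →L[ℝ] EuclideanSpace ℝ (Fin m))
    (hΦ : ∀ u ∈ O, HasFDerivAt Φ (DΦ u) u)
    (hΦ2 : ∀ u ∈ O, HasFDerivAt DΦ (D2Φ u) u)
    (hvar : ∀ u ∈ O, ∀ i : Fin m, ⟪u - φ (Φ u), ψ i (Φ u)⟫_ℝ = 0)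
    (hbio : ∀ (α : EuclideanSpace ℝ (Fin m)) (i j : Fin m),
      ⟪ψ i α, fderiv ℝ φ α (EuclideanSpace.single j 1)⟫_ℝ = if i = j then (1:ℝ) else 0)
    (α : EuclideanSpace ℝ (Fin m)) (hmem : φ α ∈ O) (hΦα : Φ (φ α) = α) :
    ∀ (w : H) (i : Fin m),
      (D2Φ (φ α) w w) i
        = 2 * ∑ j, ⟪ψ j α, w⟫_ℝ * ⟪fderiv ℝ (ψ i) α (EuclideanSpace.single j 1), w⟫_ℝ
          - ∑ j, ∑ k,
              ⟪fderiv ℝ φ α (EuclideanSpace.single j 1),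
                fderiv ℝ (ψ i) α (EuclideanSpace.single k 1)⟫_ℝ
                * ⟪ψ j α, w⟫_ℝ * ⟪ψ k α, w⟫_ℝ := by
  intro w i
  have hφd : Differentiable ℝ φ := hφ.differentiable (by norm_num)
  have hψd : ∀ i, Differentiable ℝ (ψ i) := fun i => (hψ i).differentiable (by norm_num)
  have key : ∀ u ∈ O, ∀ i, (DΦ u w) i = ⟪w, ψ i (Φ u)⟫_ℝ
      + ⟪u - φ (Φ u), fderiv ℝ (ψ i) (Φ u) (DΦ u w)⟫_ℝ :=
    fun u hu i => phase_deriv_formula hO hφd hψd hΦ hvar hbio hu w i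
  have ha : ∀ j, (DΦ (φ α) w) j = ⟪ψ j α, w⟫_ℝ := by
    intro j
    rw [key _ hmem j, hΦα, sub_self, inner_zero_left, add_zero, real_inner_comm]
  have hΦ' := hΦ _ hmem
  have hDw : HasFDerivAt (fun u => DΦ u w) ((D2Φ (φ α)).flip w) (φ α) := by
    simpa using (hΦ2 _ hmem).clm_apply (hasFDerivAt_const w (φ α))
  have hL : HasFDerivAt (fun u => (DΦ u w) i)
      ((EuclideanSpace.proj i).comp ((D2Φ (φ α)).flip w)) (φ α) :=
    (EuclideanSpace.proj (𝕜 := ℝ) i).hasFDerivAt.comp (φ α) hDw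
  have h1 : HasFDerivAt (fun u => u - φ (Φ u))
      (ContinuousLinearMap.id ℝ H - (fderiv ℝ φ (Φ (φ α))).comp (DΦ (φ α))) (φ α) :=
    (hasFDerivAt_id (φ α)).sub ((hφd _).hasFDerivAt.comp (φ α) hΦ')
  have h2 : HasFDerivAt (fun u => ψ i (Φ u))
      ((fderiv ℝ (ψ i) (Φ (φ α))).comp (DΦ (φ α))) (φ α) :=
    (hψd i _).hasFDerivAt.comp (φ α) hΦ'
  -- The value of this derivative is irrelevant: it gets paired with `φ α - φ (Φ (φ α)) = 0`.
  have h3 : DifferentiableAt ℝ (fun u => fderiv ℝ (ψ i) (Φ u) (DΦ u w)) (φ α) := by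
    have hd : Differentiable ℝ (fderiv ℝ (ψ i)) :=
      ((hψ i).fderiv_right (m := 1) (by norm_num)).differentiable (by norm_num)
    exact DifferentiableAt.clm_apply
      ((hd (Φ (φ α))).comp (φ α) hΦ'.differentiableAt) hDw.differentiableAt
  have hR := ((hasFDerivAt_const w (φ α)).inner ℝ h2).add (h1.inner ℝ h3.hasFDerivAt)
  have hEq : (fun u => (DΦ u w) i) =ᶠ[nhds (φ α)]
      (fun u => ⟪w, ψ i (Φ u)⟫_ℝ) + fun u =>
        ⟪u - φ (Φ u), fderiv ℝ (ψ i) (Φ u) (DΦ u w)⟫_ℝ := by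
    filter_upwards [hO.mem_nhds hmem] with u hu using key u hu i
  have h5 := congrArg (fun L => L w) (hL.unique (hR.congr_of_eventuallyEq hEq))
  simp only [ContinuousLinearMap.comp_apply, ContinuousLinearMap.prod_apply,
    add_apply, ContinuousLinearMap.flip_apply,
    fderivInnerCLM_apply, sub_apply, ContinuousLinearMap.id_apply,
    zero_apply, hΦα, sub_self, inner_zero_left, add_zero, zero_add,
    inner_sub_left w] at h5
  have e1 : ⟪w, fderiv ℝ (ψ i) α (DΦ (φ α) w)⟫_ℝ
      = ∑ j, ⟪ψ j α, w⟫_ℝ * ⟪fderiv ℝ (ψ i) α (EuclideanSpace.single j 1), w⟫_ℝ := by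
    rw [clm_apply_eq_sum_single, inner_sum]
    refine Finset.sum_congr rfl fun j _ => ?_
    rw [inner_smul_right, ha, real_inner_comm w (fderiv ℝ (ψ i) α _)]
  have e2 : ⟪fderiv ℝ φ α (DΦ (φ α) w), fderiv ℝ (ψ i) α (DΦ (φ α) w)⟫_ℝ
      = ∑ j, ∑ k, ⟪fderiv ℝ φ α (EuclideanSpace.single j 1),
                fderiv ℝ (ψ i) α (EuclideanSpace.single k 1)⟫_ℝ
                * ⟪ψ j α, w⟫_ℝ * ⟪ψ k α, w⟫_ℝ := by
    rw [clm_apply_eq_sum_single (fderiv ℝ φ α), clm_apply_eq_sum_single (fderiv ℝ (ψ i) α),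
      sum_inner]
    refine Finset.sum_congr rfl fun j _ => ?_
    rw [inner_sum]
    refine Finset.sum_congr rfl fun k _ => ?_
    rw [real_inner_smul_left, real_inner_smul_right, ha, ha]
    ring
  change (D2Φ (φ α) w w) i = _ at h5
  rw [e1, e2] at h5
  linarith
end

section
/- Let 𝔠 ≥ 1, b > 0 and κ > 0, and set Δt := b⁻¹ log(4𝔠). Let h : [0, Δt] → [0,∞) be continuous with h(0) ≤ κ/(2𝔠), and let Z ≥ 0 be a constant such that for every t ∈ [0, Δt] satisfying h(s) ≤ κ for all s ∈ [0, t], one has h(t) ≤ 𝔠 e^{−bt} h(0) + κ/(8𝔠) + Z. If either h(Δt) > κ/(2𝔠) or h(t) > κ for some t ∈ [0, Δt], then Z ≥ κ/(4𝔠). -/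
/-! If `h` stays below `κ` on the whole block, the bound at `Δt`, where `𝔠 e^{-bΔt} = 1/4`, turns the
endpoint escape into `Z > κ/(4𝔠)`. Otherwise `first_hitting_time` gives a first time `τ` with
`h τ = κ`; the bound applies at `τ`, and `e^{-bτ} ≤ 1` yields `κ ≤ κ/2 + κ/(8𝔠) + Z`, which suffices
because `𝔠 ≥ 1`. -/

/-- A continuous function starting at or below the level `κ` and lying above it at time `t` has a
first hitting time of `κ`, up to which it does not exceed `κ`. -/
lemma first_hitting_time {h : ℝ → ℝ} {t κ : ℝ} (ht : 0 ≤ t)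
    (hcont : ContinuousOn h (Set.Icc 0 t)) (h0 : h 0 ≤ κ) (hκ : κ < h t) :
    ∃ τ ∈ Set.Icc 0 t, h τ = κ ∧ ∀ s ∈ Set.Icc 0 τ, h s ≤ κ := by
  have hclosed : IsClosed (Set.Icc 0 t ∩ h ⁻¹' Set.Ici κ) :=
    hcont.preimage_isClosed_of_isClosed isClosed_Icc isClosed_Ici
  have hcompact : IsCompact (Set.Icc 0 t ∩ h ⁻¹' Set.Ici κ) :=
    isCompact_Icc.of_isClosed_subset hclosed Set.inter_subset_left
  obtain ⟨τ, ⟨hτ, hκτ⟩, hmin⟩ := hcompact.exists_isLeast ⟨t, ⟨ht, le_rfl⟩, hκ.le⟩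
  -- The intermediate value theorem gives a point of `[0, τ]` at level `κ`; by minimality it is `τ`.
  obtain ⟨s, hs, hsκ⟩ := intermediate_value_Icc hτ.1
    (hcont.mono (Set.Icc_subset_Icc_right hτ.2)) ⟨h0, hκτ⟩
  have hsτ : s = τ := le_antisymm hs.2 (hmin ⟨⟨hs.1, hs.2.trans hτ.2⟩, hsκ.ge⟩)
  subst hsτ
  refine ⟨s, hτ, hsκ, fun r hr => ?_⟩
  by_contra! hlt
  have hrs : r = s := le_antisymm hr.2 (hmin ⟨⟨hr.1, hr.2.trans hτ.2⟩, hlt.le⟩)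
  subst hrs
  exact hlt.ne' hsκ

/-- Pathwise core of the event-inclusion lemma in the exponential exit-time
theorem: on a time block of length `Δt = b⁻¹ log(4𝔠)`, if the amplitude `h` starts below
`κ/(2𝔠)` and, as long as it stays below `κ`, obeys `h(t) ≤ 𝔠 e^{-bt} h(0) + κ/(8𝔠) + Z`, then
an escape (endpoint above `κ/(2𝔠)`, or running amplitude above `κ`) forces the stochastic
forcing bound `Z` to exceed `κ/(4𝔠)`. -/
theorem block_escape_forces_large_noise
    (frakc b κ : ℝ) (hfrakc : 1 ≤ frakc) (hb : 0 < b) (hκ : 0 < κ)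
    (Δt : ℝ) (hΔt : Δt = b⁻¹ * Real.log (4 * frakc))
    (h : ℝ → ℝ) (hcont : ContinuousOn h (Set.Icc 0 Δt))
    (hnonneg : ∀ t ∈ Set.Icc (0:ℝ) Δt, 0 ≤ h t)
    (h0 : h 0 ≤ κ / (2 * frakc))
    (Z : ℝ) (hZ : 0 ≤ Z)
    (hbound : ∀ t ∈ Set.Icc (0:ℝ) Δt, (∀ s ∈ Set.Icc (0:ℝ) t, h s ≤ κ) →
      h t ≤ frakc * Real.exp (-b * t) * h 0 + κ / (8 * frakc) + Z)
    (hesc : κ / (2 * frakc) < h Δt ∨ ∃ t ∈ Set.Icc (0:ℝ) Δt, κ < h t) :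
    κ / (4 * frakc) ≤ Z := by
  have hc : 0 < frakc := by linarith
  have hΔ : 0 ≤ Δt := by
    rw [hΔt]
    exact mul_nonneg (inv_nonneg.2 hb.le) (Real.log_nonneg (by linarith))
  -- All thresholds are expressed through `q = κ/(8𝔠)`, with `8 q ≤ κ`.
  obtain ⟨q, hq⟩ : ∃ q, q = κ / (8 * frakc) := ⟨_, rfl⟩
  have hκq : κ = 8 * (frakc * q) := by rw [hq]; field_simp
  have e2 : κ / (2 * frakc) = 4 * q := by rw [hq]; field_simp; norm_num
  have e4 : κ / (4 * frakc) = 2 * q := by rw [hq]; field_simp; norm_num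
  have hqpos : 0 < q := by rw [hq]; positivity
  have hcq : q ≤ frakc * q := le_mul_of_one_le_left hqpos.le hfrakc
  rw [← hq] at hbound
  rw [e2] at h0 hesc
  rw [e4]
  by_cases hex : ∃ t ∈ Set.Icc (0:ℝ) Δt, κ < h t
  · obtain ⟨t, ht, hκt⟩ := hex
    obtain ⟨τ, hτ, hhτ, hle⟩ := first_hitting_time ht.1
      (hcont.mono (Set.Icc_subset_Icc_right ht.2)) (by linarith) hκt
    have hB := hbound τ ⟨hτ.1, hτ.2.trans ht.2⟩ hle
    have hexp : Real.exp (-b * τ) ≤ 1 := by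
      rw [Real.exp_le_one_iff]
      nlinarith [mul_nonneg hb.le hτ.1]
    have hprod : frakc * Real.exp (-b * τ) * h 0 ≤ frakc * 1 * (4 * q) := by
      have hh0 := hnonneg 0 ⟨le_rfl, hΔ⟩
      gcongr
    linarith
  · have hend : 4 * q < h Δt := hesc.resolve_right hex
    push Not at hex
    have hB := hbound Δt ⟨hΔ, le_rfl⟩ hex
    have hexp : frakc * Real.exp (-b * Δt) = 1 / 4 := by
      have : -b * Δt = -Real.log (4 * frakc) := by rw [hΔt]; field_simp
      rw [this, Real.exp_neg, Real.exp_log (by linarith)]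
      field_simp
    rw [hexp] at hB
    linarith
end

section
/- Let (Ω, 𝓕, ℙ) be a probability space, (S, 𝓢) a measurable space, t > 0, and X : [0,t] × Ω → S jointly measurable. Let ḡ : S → ℝ be measurable with |ḡ(x)| ≤ M for all x ∈ S, and suppose there are constants T₀ ∈ [0, t] and η ≥ 0 such that E[ḡ(X_r) ḡ(X_s)] ≤ η whenever r, s ∈ [0,t] satisfy |r − s| ≥ T₀. Then for every δ > 0: ℙ( |∫₀^t ḡ(X_s(ω)) ds| ≥ t δ/2 ) ≤ (4/δ²) ( 2 T₀ M²/t + η ). -/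
/-!
Write `I ω = ∫₀ᵗ ḡ(X_s(ω)) ds`. Chebyshev's inequality reduces the claim to the second moment
bound `E[I²] ≤ t (2 T₀ M² + η t)`. By Fubini, `E[I²]` is the double integral over `[0,t]²` of the
covariances `E[ḡ(X_r) ḡ(X_s)]`; these are at most `η` off the diagonal strip `|r - s| < T₀` and at
most `M²` on it, and each slice of the strip has length at most `2 T₀`
(`second_moment_occupation_le`).
-/

open MeasureTheory

/-- The second moment bound, for a real-valued process `f` that is jointly measurable and bounded
on all of `ℝ × Ω`, with the covariance bound required only on `(0,t]`. -/
theorem second_moment_occupation_le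
    {Ω : Type*} [MeasurableSpace Ω] (P : Measure Ω) [IsProbabilityMeasure P]
    (t : ℝ) (ht : 0 < t) (f : ℝ → Ω → ℝ) (hf : Measurable (Function.uncurry f))
    (M : ℝ) (hM : ∀ s ω, |f s ω| ≤ M) (T₀ : ℝ) (hT₀ : 0 ≤ T₀) (η : ℝ) (hη : 0 ≤ η)
    (hcov : ∀ r s : ℝ, r ∈ Set.Ioc (0:ℝ) t → s ∈ Set.Ioc (0:ℝ) t → T₀ ≤ |r - s| →
      (∫ ω, f r ω * f s ω ∂P) ≤ η) :
    ∫ ω, (∫ s in Set.Ioc 0 t, f s ω) ^ 2 ∂P ≤ t * (2 * T₀ * M ^ 2 + η * t) := by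
  set ν : Measure ℝ := volume.restrict (Set.Ioc 0 t) with hν
  have hνt : ν.real Set.univ = t := by simp [hν, measureReal_def, ht.le]
  have hprod : ∀ r s ω, ‖f r ω * f s ω‖ ≤ M ^ 2 := by
    intro r s ω
    rw [norm_mul, Real.norm_eq_abs, Real.norm_eq_abs, pow_two]
    exact mul_le_mul (hM r ω) (hM s ω) (abs_nonneg _) ((abs_nonneg _).trans (hM r ω))
  have hI : StronglyMeasurable fun ω => ∫ s, f s ω ∂ν :=
    hf.stronglyMeasurable.integral_prod_left
  have hIb : ∀ ω, ‖∫ s, f s ω ∂ν‖ ≤ M * t := by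
    intro ω
    have := norm_integral_le_of_norm_le_const (μ := ν) (f := fun s => f s ω)
      (Filter.Eventually.of_forall fun s => hM s ω)
    rwa [hνt] at this
  have hint1 : Integrable (Function.uncurry fun ω r => f r ω * ∫ s, f s ω ∂ν) (P.prod ν) := by
    refine Integrable.of_bound (C := M * (M * t)) ?_ (Filter.Eventually.of_forall ?_)
    · exact ((hf.comp measurable_swap).mul
        (hI.measurable.comp measurable_fst)).aestronglyMeasurable
    · rintro ⟨ω, r⟩
      simp only [Function.uncurry, norm_mul]
      exact mul_le_mul (hM r ω) (hIb ω) (norm_nonneg _) ((abs_nonneg _).trans (hM r ω))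
  have hint2 : ∀ r, Integrable (Function.uncurry fun ω s => f r ω * f s ω) (P.prod ν) := by
    intro r
    refine Integrable.of_bound (C := M ^ 2) ?_ (Filter.Eventually.of_forall ?_)
    · exact (((hf.of_uncurry_left (x := r)).comp measurable_fst).mul
        (hf.comp measurable_swap)).aestronglyMeasurable
    · rintro ⟨ω, s⟩
      exact hprod r s ω
  have hfubini : ∫ ω, (∫ s, f s ω ∂ν) ^ 2 ∂P
      = ∫ r, ∫ s, ∫ ω, f r ω * f s ω ∂P ∂ν ∂ν := by
    calc ∫ ω, (∫ s, f s ω ∂ν) ^ 2 ∂P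
        = ∫ ω, ∫ r, f r ω * ∫ s, f s ω ∂ν ∂ν ∂P := by
          refine integral_congr_ae (Filter.Eventually.of_forall fun ω => ?_)
          simp only [integral_mul_const, pow_two]
      _ = ∫ r, ∫ ω, f r ω * ∫ s, f s ω ∂ν ∂P ∂ν := integral_integral_swap hint1
      _ = ∫ r, ∫ ω, ∫ s, f r ω * f s ω ∂ν ∂P ∂ν := by simp only [integral_const_mul]
      _ = ∫ r, ∫ s, ∫ ω, f r ω * f s ω ∂P ∂ν ∂ν := by
          congr 1
          ext r
          exact integral_integral_swap (hint2 r)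
  have hC : ∀ r s, ∫ ω, f r ω * f s ω ∂P ≤ M ^ 2 := by
    intro r s
    have := norm_integral_le_of_norm_le_const (μ := P) (f := fun ω => f r ω * f s ω)
      (Filter.Eventually.of_forall fun ω => hprod r s ω)
    simp only [probReal_univ, mul_one] at this
    exact (le_abs_self _).trans this
  have hinner : ∀ r ∈ Set.Ioc (0:ℝ) t,
      ∫ s, ∫ ω, f r ω * f s ω ∂P ∂ν ≤ 2 * T₀ * M ^ 2 + η * t := by
    intro r hr
    have hind : Integrable ((Metric.ball r T₀).indicator fun _ => M ^ 2) ν :=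
      (integrable_const _).indicator Metric.isOpen_ball.measurableSet
    calc ∫ s, ∫ ω, f r ω * f s ω ∂P ∂ν
        ≤ ∫ s, ((Metric.ball r T₀).indicator (fun _ => M ^ 2) s + η) ∂ν := by
          refine integral_mono_ae (hint2 r).integral_prod_right
            (hind.add (integrable_const η)) ?_
          filter_upwards [ae_restrict_mem measurableSet_Ioc] with s hs
          by_cases h : s ∈ Metric.ball r T₀
          · simp only [Set.indicator_of_mem h]
            linarith [hC r s]
          · simp only [Set.indicator_of_notMem h, zero_add]
            refine hcov r s hr hs ?_
            rw [Metric.mem_ball, Real.dist_eq, not_lt, abs_sub_comm] at h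
            exact h
      _ = ν.real (Metric.ball r T₀) * M ^ 2 + η * t := by
          rw [integral_add hind (integrable_const η),
            integral_indicator_const _ Metric.isOpen_ball.measurableSet, integral_const, hνt]
          simp [mul_comm]
      _ ≤ 2 * T₀ * M ^ 2 + η * t := by
          have hball : ν.real (Metric.ball r T₀) ≤ 2 * T₀ := by
            rw [← Real.volume_real_ball hT₀ (a := r)]
            exact ENNReal.toReal_mono measure_ball_lt_top.ne (Measure.restrict_apply_le _ _)
          gcongr
  rw [hfubini]
  have hout : Integrable (fun r => ∫ s, ∫ ω, f r ω * f s ω ∂P ∂ν) ν := by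
    have : (fun r => ∫ s, ∫ ω, f r ω * f s ω ∂P ∂ν)
        = fun r => ∫ ω, f r ω * ∫ s, f s ω ∂ν ∂P := by
      ext r
      rw [← integral_integral_swap (hint2 r)]
      simp only [integral_const_mul]
    rw [this]
    exact hint1.integral_prod_right
  calc ∫ r, ∫ s, ∫ ω, f r ω * f s ω ∂P ∂ν ∂ν
      ≤ ∫ _, (2 * T₀ * M ^ 2 + η * t) ∂ν := by
        refine integral_mono_ae hout (integrable_const _) ?_
        filter_upwards [ae_restrict_mem measurableSet_Ioc] with r hr using hinner r hr
    _ = t * (2 * T₀ * M ^ 2 + η * t) := by rw [integral_const, hνt, smul_eq_mul]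

/-- Quantitative Chebyshev/covariance-decay bound for occupation times:
if `|ḡ| ≤ M` and the covariances `E[ḡ(X_r) ḡ(X_s)]` are at most `η` whenever `|r - s| ≥ T₀`,
then `ℙ(|∫₀^t ḡ(X_s) ds| ≥ t δ/2) ≤ (4/δ²)(2 T₀ M²/t + η)`. -/
theorem occupation_time_chebyshev
    {Ω : Type*} [MeasurableSpace Ω] (P : Measure Ω) [IsProbabilityMeasure P]
    {S : Type*} [MeasurableSpace S]
    (t : ℝ) (ht : 0 < t)
    (X : ℝ → Ω → S)
    (hX : Measurable fun p : Set.Icc (0:ℝ) t × Ω => X p.1.1 p.2)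
    (g : S → ℝ) (hg : Measurable g)
    (M : ℝ) (hM : ∀ x : S, |g x| ≤ M)
    (T₀ : ℝ) (hT₀ : T₀ ∈ Set.Icc (0:ℝ) t)
    (η : ℝ) (hη : 0 ≤ η)
    (hcov : ∀ r s : ℝ, r ∈ Set.Icc (0:ℝ) t → s ∈ Set.Icc (0:ℝ) t → T₀ ≤ |r - s| →
      (∫ ω, g (X r ω) * g (X s ω) ∂P) ≤ η)
    (δ : ℝ) (hδ : 0 < δ) :
    P {ω | t * δ / 2 ≤ |∫ s in (0:ℝ)..t, g (X s ω)|}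
      ≤ ENNReal.ofReal ((4 / δ ^ 2) * (2 * T₀ * M ^ 2 / t + η)) := by
  -- Clamping time to `[0,t]` gives a process that is jointly measurable on `ℝ × Ω` and agrees
  -- with `g (X s ω)` for `s ∈ [0,t]`.
  let f : ℝ → Ω → ℝ := fun s ω => g (X (Set.projIcc 0 t ht.le s) ω)
  have hfX : ∀ s ∈ Set.Icc (0:ℝ) t, ∀ ω, f s ω = g (X s ω) := by
    intro s hs ω
    simp only [f, Set.projIcc_of_mem ht.le hs]
  have hf : Measurable (Function.uncurry f) :=
    hg.comp (hX.comp (((continuous_projIcc (h := ht.le)).measurable.comp measurable_fst).prodMk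
      measurable_snd))
  have hfM : ∀ s ω, |f s ω| ≤ M := fun s ω => hM _
  have hmom := second_moment_occupation_le P t ht f hf M hfM T₀ hT₀.1 η hη (by
    intro r s hr hs hrs
    simp only [hfX r (Set.Ioc_subset_Icc_self hr), hfX s (Set.Ioc_subset_Icc_self hs)]
    exact hcov r s (Set.Ioc_subset_Icc_self hr) (Set.Ioc_subset_Icc_self hs) hrs)
  have hI : ∀ ω, ∫ s in (0:ℝ)..t, g (X s ω) = ∫ s in Set.Ioc 0 t, f s ω := by
    intro ω
    rw [intervalIntegral.integral_of_le ht.le]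
    exact setIntegral_congr_fun measurableSet_Ioc fun s hs =>
      (hfX s (Set.Ioc_subset_Icc_self hs) ω).symm
  simp only [hI]
  have hIm : StronglyMeasurable fun ω => ∫ s in Set.Ioc 0 t, f s ω :=
    hf.stronglyMeasurable.integral_prod_left
  have hint : Integrable (fun ω => (∫ s in Set.Ioc 0 t, f s ω) ^ 2) P := by
    refine Integrable.of_bound (C := (M * t) ^ 2) (hIm.measurable.pow_const 2).aestronglyMeasurable
      (Filter.Eventually.of_forall fun ω => ?_)
    have := norm_integral_le_of_norm_le_const (μ := volume.restrict (Set.Ioc 0 t))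
      (f := fun s => f s ω) (Filter.Eventually.of_forall fun s => hfM s ω)
    rw [norm_pow]
    gcongr
    simpa [measureReal_def, ht.le] using this
  have hcheb := mul_meas_ge_le_integral_of_nonneg
    (Filter.Eventually.of_forall fun ω => sq_nonneg (∫ s in Set.Ioc 0 t, f s ω)) hint
    ((t * δ / 2) ^ 2)
  have hset : {ω | t * δ / 2 ≤ |∫ s in Set.Ioc 0 t, f s ω|}
      = {ω | (t * δ / 2) ^ 2 ≤ (∫ s in Set.Ioc 0 t, f s ω) ^ 2} := by
    ext ω
    simp only [Set.mem_ofPred_eq]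
    rw [sq_le_sq, abs_of_pos (by positivity : 0 < t * δ / 2)]
  rw [hset, ← ofReal_measureReal]
  refine ENNReal.ofReal_le_ofReal ?_
  have hpos : 0 < (t * δ / 2) ^ 2 := by positivity
  refine le_of_mul_le_mul_left ((hcheb.trans hmom).trans_eq ?_) hpos
  field_simp
  ring
end
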